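/- arXiv:1711.05924 — 2 statements merged into one kernel-verified Lean document; each statement's English description precedes it below -/
import Mathlib

section
/- Let n = p₁²p₂²⋯p_t² with distinct primes p₁ < p₂ < ⋯ < p_t. If t = 1, there exists a divisor d of n with d^4 ≤ n such that τ(n) ≤ 3·τ(d). If t ∈ {2, 3}, there exists a divisor d of n with d^4 ≤ n such that 2²·τ(n) ≤ τ(d)^7. If t ≥ 4, there exists a divisor d of n with d^4 ≤ n such that τ(n) ≤ τ(d)^7. -/
/-!
Write `n = m ^ 2` with `m` squarefree, so that `τ n = 3 ^ t` where `t` is the number of primes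
dividing `m`. Choose two disjoint sets of `t / 2` primes dividing `m`, and let `d` be the smaller of
the two products. Then `d ^ 2 ≤ m`, that is `d ^ 4 ≤ n`, while `τ d = 2 ^ (t / 2)`.
-/

open Finset

theorem exists_subset_card_eq_sq_prod_le_prod {ι M : Type*} [CommMonoid M] [LinearOrder M]
    [IsOrderedMonoid M] {s : Finset ι} {f : ι → M} (hf : ∀ i ∈ s, 1 ≤ f i) {k : ℕ}
    (hk : 2 * k ≤ #s) : ∃ u ⊆ s, #u = k ∧ (∏ i ∈ u, f i) ^ 2 ≤ ∏ i ∈ s, f i := by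
  classical
  obtain ⟨u, hus, hu⟩ := exists_subset_card_eq (s := s) (n := k) (by lia)
  obtain ⟨v, hvs, hv⟩ := exists_subset_card_eq (s := s \ u) (n := k)
    (by rw [card_sdiff_of_subset hus]; lia)
  have hv_sub : v ⊆ s := hvs.trans sdiff_subset
  have hdisj : Disjoint u v := disjoint_sdiff.mono_right hvs
  have hprod : (∏ i ∈ u, f i) * ∏ i ∈ v, f i ≤ ∏ i ∈ s, f i := by
    rw [← prod_union hdisj]
    exact prod_le_prod_of_subset_of_one_le' (union_subset hus hv_sub) fun i hi _ ↦ hf i hi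
  rcases le_total (∏ i ∈ u, f i) (∏ i ∈ v, f i) with huv | hvu
  · exact ⟨u, hus, hu, (sq _).trans_le ((mul_le_mul_right huv _).trans hprod)⟩
  · exact ⟨v, hv_sub, hv, (sq _).trans_le ((mul_le_mul_left hvu _).trans hprod)⟩

section Squarefree

variable {m : ℕ}

theorem card_divisors_pow_of_squarefree (hm : Squarefree m) (e : ℕ) :
    #(m ^ e).divisors = (e + 1) ^ #m.primeFactors := by
  rcases eq_or_ne e 0 with rfl | he
  · simp
  rw [Nat.card_divisors (pow_ne_zero e hm.ne_zero), Nat.primeFactors_pow m he]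
  refine prod_eq_pow_card fun q hq ↦ ?_
  have hq_one : m.factorization q = 1 := Nat.factorization_eq_one_of_squarefree hm
    (Nat.prime_of_mem_primeFactors hq) (Nat.dvd_of_mem_primeFactors hq)
  simp [hq_one]

theorem exists_dvd_sq_le_card_primeFactors_eq (hm : Squarefree m) {k : ℕ}
    (hk : 2 * k ≤ #m.primeFactors) : ∃ d, d ∣ m ∧ d ^ 2 ≤ m ∧ #d.primeFactors = k := by
  obtain ⟨u, hu, hcard, hsq⟩ := exists_subset_card_eq_sq_prod_le_prod (f := id)
    (fun q hq ↦ (Nat.prime_of_mem_primeFactors hq).one_le) hk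
  have hprod : ∏ q ∈ m.primeFactors, q = m := Nat.prod_primeFactors_of_squarefree hm
  refine ⟨∏ q ∈ u, q, ?_, hsq.trans_eq hprod, ?_⟩
  · exact (prod_dvd_prod_of_subset u _ _ hu).trans hprod.dvd
  · rw [Nat.primeFactors_prod fun q hq ↦ Nat.prime_of_mem_primeFactors (hu hq), hcard]

end Squarefree

theorem four_mul_three_pow_le_two_pow_half_pow_seven {t : ℕ} (ht : 2 ≤ t) :
    2 ^ 2 * 3 ^ t ≤ (2 ^ (t / 2)) ^ 7 := by
  have hhalf : t / 2 ≠ 0 := by lia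
  calc 2 ^ 2 * 3 ^ t ≤ 2 ^ 2 * 3 ^ (2 * (t / 2) + 1) := by gcongr <;> lia
    _ = 12 * 9 ^ (t / 2) := by rw [pow_succ 3, pow_mul]; ring
    _ ≤ 14 ^ (t / 2) * 9 ^ (t / 2) := by
      gcongr
      exact (by norm_num : 12 ≤ 14).trans (Nat.le_self_pow hhalf 14)
    _ = 126 ^ (t / 2) := by rw [← mul_pow]; norm_num
    _ ≤ 128 ^ (t / 2) := by gcongr; norm_num
    _ = (2 ^ (t / 2)) ^ 7 := by rw [pow_right_comm]; norm_num

theorem square_case_general {m : ℕ} (hm : Squarefree m) :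
    (#m.primeFactors = 1 → ∃ d : ℕ, d ∣ m ^ 2 ∧ d ^ 4 ≤ m ^ 2 ∧
      #(m ^ 2).divisors ≤ 3 * #d.divisors) ∧
    (2 ≤ #m.primeFactors → ∃ d : ℕ, d ∣ m ^ 2 ∧ d ^ 4 ≤ m ^ 2 ∧
      2 ^ 2 * #(m ^ 2).divisors ≤ #d.divisors ^ 7) := by
  rw [card_divisors_pow_of_squarefree hm]
  refine ⟨fun h_one ↦ ?_, fun h_two ↦ ?_⟩
  · exact ⟨1, one_dvd _, by simpa using Nat.one_le_pow 2 m hm.ne_zero.bot_lt, by simp [h_one]⟩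
  · obtain ⟨d, hdm, hd_sq, hd_card⟩ :=
      exists_dvd_sq_le_card_primeFactors_eq hm (Nat.mul_div_le _ 2)
    have hd_four : d ^ 4 ≤ m ^ 2 :=
      calc d ^ 4 = (d ^ 2) ^ 2 := by ring
        _ ≤ m ^ 2 := by gcongr
    have hd_divisors : #d.divisors = 2 ^ (#m.primeFactors / 2) := by
      simpa [hd_card] using card_divisors_pow_of_squarefree (hm.squarefree_of_dvd hdm) 1
    refine ⟨d, hdm.trans (dvd_pow_self m two_ne_zero), hd_four, ?_⟩
    rw [hd_divisors]
    exact four_mul_three_pow_le_two_pow_half_pow_seven h_two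

section DistinctPrimes

variable {ι : Type*} {s : Finset ι} {p : ι → ℕ}

theorem squarefree_prod_of_injOn_primes (hp : ∀ i ∈ s, (p i).Prime) (hinj : Set.InjOn p s) :
    Squarefree (∏ i ∈ s, p i) := by
  refine squarefree_prod_of_pairwise_isCoprime (fun i hi j hj hij ↦ ?_)
    fun i hi ↦ (hp i hi).squarefree
  exact Nat.coprime_iff_isRelPrime.mp
    ((Nat.coprime_primes (hp i hi) (hp j hj)).mpr (hinj.ne hi hj hij))

theorem card_primeFactors_prod_of_injOn_primes (hp : ∀ i ∈ s, (p i).Prime)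
    (hinj : Set.InjOn p s) : #(∏ i ∈ s, p i).primeFactors = #s := by
  have himage : ∏ q ∈ s.image p, q = ∏ i ∈ s, p i := prod_image hinj
  rw [← himage, Nat.primeFactors_prod (forall_mem_image.mpr hp), card_image_of_injOn hinj]

end DistinctPrimes

theorem square_case (t : ℕ) (p : ℕ → ℕ)
    (hp : ∀ i ∈ Finset.Icc 1 t, (p i).Prime)
    (hmono : ∀ i j, 1 ≤ i → i < j → j ≤ t → p i < p j)
    (n : ℕ) (hn : n = ∏ i ∈ Finset.Icc 1 t, p i ^ 2) :
    (t = 1 → ∃ d : ℕ, d ∣ n ∧ d ^ 4 ≤ n ∧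
      n.divisors.card ≤ 3 * d.divisors.card) ∧
    (t = 2 ∨ t = 3 → ∃ d : ℕ, d ∣ n ∧ d ^ 4 ≤ n ∧
      2 ^ 2 * n.divisors.card ≤ d.divisors.card ^ 7) ∧
    (4 ≤ t → ∃ d : ℕ, d ∣ n ∧ d ^ 4 ≤ n ∧
      n.divisors.card ≤ d.divisors.card ^ 7) := by
  have hinj : Set.InjOn p (Icc 1 t) := StrictMonoOn.injOn fun i hi j hj hij ↦
    hmono i j (mem_Icc.mp hi).1 hij (mem_Icc.mp hj).2
  have hcases := square_case_general (squarefree_prod_of_injOn_primes hp hinj)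
  rw [card_primeFactors_prod_of_injOn_primes hp hinj, Nat.card_Icc, Nat.add_sub_cancel,
    ← prod_pow, ← hn] at hcases
  obtain ⟨h_one, h_two⟩ := hcases
  refine ⟨h_one, fun ht ↦ h_two (by lia), fun ht ↦ ?_⟩
  obtain ⟨d, hdn, hd_four, hd_card⟩ := h_two (by lia)
  exact ⟨d, hdn, hd_four, by lia⟩
end

section
/- Let n = p₁³p₂³⋯p_t³ with distinct primes p₁ < p₂ < ⋯ < p_t. If t = 1, there exists a divisor d of n with d^4 ≤ n such that τ(n) ≤ 4·τ(d). If t = 2, there exists a divisor d of n with d^4 ≤ n such that 2³·τ(n) ≤ τ(d)^7. If t = 3, there exists a divisor d of n with d^4 ≤ n such that 2⁵·τ(n) ≤ τ(d)^7. If t ≥ 4, there exists a divisor d of n with d^4 ≤ n such that τ(n) ≤ τ(d)^7. -/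
/-!
Write `n = R ^ 3` with `R = p₁ ⋯ p_t`. One divisor serves for every `t`: the product `d` of the
`k = ⌊3t / 4⌋` smallest primes. The geometric mean of `p₁, …, p_k` is at most that of `p₁, …, p_t`,
so `d ^ t ≤ R ^ k`, and `4k ≤ 3t` turns this into `d ^ 4 ≤ R ^ 3`. Since `τ(n) = 4 ^ t` and
`τ(d) = 2 ^ k`, each bound is a comparison of powers of `2`.
-/

open Finset

section OrderedMonoid

variable {ι κ M : Type*} [CommMonoid M] [Preorder M] [IsOrderedMonoid M]

theorem prod_pow_card_le_prod_pow_card {s : Finset ι} {u : Finset κ} {f : ι → M} {g : κ → M}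
    (hfg : ∀ i ∈ s, ∀ j ∈ u, f i ≤ g j) : (∏ i ∈ s, f i) ^ #u ≤ (∏ j ∈ u, g j) ^ #s :=
  calc (∏ i ∈ s, f i) ^ #u = ∏ i ∈ s, ∏ _j ∈ u, f i := by simp only [prod_const, prod_pow]
    _ ≤ ∏ _i ∈ s, ∏ j ∈ u, g j := prod_le_prod' fun i hi => prod_le_prod' (hfg i hi)
    _ = (∏ j ∈ u, g j) ^ #s := prod_const _

theorem prod_pow_card_le_prod_pow_card_of_subset [DecidableEq ι] {s v : Finset ι} {f : ι → M}
    (hsv : s ⊆ v) (hf : ∀ i ∈ s, ∀ j ∈ v \ s, f i ≤ f j) :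
    (∏ i ∈ s, f i) ^ #v ≤ (∏ i ∈ v, f i) ^ #s :=
  calc (∏ i ∈ s, f i) ^ #v = (∏ i ∈ s, f i) ^ #(v \ s) * (∏ i ∈ s, f i) ^ #s := by
        rw [← pow_add, card_sdiff_add_card_eq_card hsv]
    _ ≤ (∏ i ∈ v \ s, f i) ^ #s * (∏ i ∈ s, f i) ^ #s :=
        mul_le_mul_left (prod_pow_card_le_prod_pow_card hf) _
    _ = (∏ i ∈ v, f i) ^ #s := by rw [← mul_pow, prod_sdiff hsv]

end OrderedMonoid

variable {ι : Type*}

theorem prod_pow_le_prod_pow_of_mul_card_le [DecidableEq ι] {s v : Finset ι} {f : ι → ℕ} {a b : ℕ}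
    (hsv : s ⊆ v) (hf : ∀ i ∈ s, ∀ j ∈ v \ s, f i ≤ f j) (hpos : ∀ i ∈ v, 0 < f i)
    (hab : a * #s ≤ b * #v) : (∏ i ∈ s, f i) ^ a ≤ (∏ i ∈ v, f i) ^ b := by
  obtain rfl | hv := v.eq_empty_or_nonempty
  · simp [subset_empty.mp hsv]
  refine (Nat.pow_le_pow_iff_left hv.card_ne_zero).mp ?_
  calc ((∏ i ∈ s, f i) ^ a) ^ #v = ((∏ i ∈ s, f i) ^ #v) ^ a := pow_right_comm _ _ _
    _ ≤ ((∏ i ∈ v, f i) ^ #s) ^ a :=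
        Nat.pow_le_pow_left (prod_pow_card_le_prod_pow_card_of_subset hsv hf) a
    _ = (∏ i ∈ v, f i) ^ (a * #s) := by rw [← pow_mul, mul_comm]
    _ ≤ (∏ i ∈ v, f i) ^ (b * #v) := Nat.pow_le_pow_right (prod_pos hpos) hab
    _ = ((∏ i ∈ v, f i) ^ b) ^ #v := pow_mul _ _ _

theorem card_divisors_prod_prime_pow {s : Finset ι} {p : ι → ℕ} (hp : ∀ i ∈ s, (p i).Prime)
    (hinj : Set.InjOn p s) (e : ι → ℕ) :
    #(∏ i ∈ s, p i ^ e i).divisors = ∏ i ∈ s, (e i + 1) := by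
  have hcop : (s : Set ι).Pairwise (Function.onFun Nat.Coprime fun i => p i ^ e i) :=
    fun i hi j hj hij =>
      Nat.Coprime.pow _ _ ((Nat.coprime_primes (hp i hi) (hp j hj)).mpr (hinj.ne hi hj hij))
  rw [← ArithmeticFunction.sigma_zero_apply,
    ArithmeticFunction.isMultiplicative_sigma.map_prod _ s hcop]
  exact prod_congr rfl fun i hi => ArithmeticFunction.sigma_zero_apply_prime_pow (hp i hi)

theorem exists_dvd_pow_le_card_divisors_eq_two_pow [DecidableEq ι] {s v : Finset ι} {p : ι → ℕ}
    {m e : ℕ} (hp : ∀ i ∈ v, (p i).Prime) (hinj : Set.InjOn p v) (hsv : s ⊆ v)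
    (hps : ∀ i ∈ s, ∀ j ∈ v \ s, p i ≤ p j) (he : e ≠ 0) (hme : m * #s ≤ e * #v) :
    ∃ d, d ∣ ∏ i ∈ v, p i ^ e ∧ d ^ m ≤ ∏ i ∈ v, p i ^ e ∧ #d.divisors = 2 ^ #s := by
  rw [prod_pow]
  refine ⟨∏ i ∈ s, p i, (prod_dvd_prod_of_subset s v p hsv).trans (dvd_pow_self _ he),
    prod_pow_le_prod_pow_of_mul_card_le hsv hps (fun i hi => (hp i hi).pos) hme, ?_⟩
  simpa using card_divisors_prod_prime_pow (fun i hi => hp i (hsv hi)) (hinj.mono hsv) 1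

theorem cube_case (t : ℕ) (p : ℕ → ℕ)
    (hp : ∀ i ∈ Finset.Icc 1 t, (p i).Prime)
    (hmono : ∀ i j, 1 ≤ i → i < j → j ≤ t → p i < p j)
    (n : ℕ) (hn : n = ∏ i ∈ Finset.Icc 1 t, p i ^ 3) :
    (t = 1 → ∃ d : ℕ, d ∣ n ∧ d ^ 4 ≤ n ∧
      n.divisors.card ≤ 4 * d.divisors.card) ∧
    (t = 2 → ∃ d : ℕ, d ∣ n ∧ d ^ 4 ≤ n ∧
      2 ^ 3 * n.divisors.card ≤ d.divisors.card ^ 7) ∧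
    (t = 3 → ∃ d : ℕ, d ∣ n ∧ d ^ 4 ≤ n ∧
      2 ^ 5 * n.divisors.card ≤ d.divisors.card ^ 7) ∧
    (4 ≤ t → ∃ d : ℕ, d ∣ n ∧ d ^ 4 ≤ n ∧
      n.divisors.card ≤ d.divisors.card ^ 7) := by
  have hinj : Set.InjOn p (Icc 1 t) := StrictMonoOn.injOn fun i hi j hj hij =>
    hmono i j (mem_Icc.mp hi).1 hij (mem_Icc.mp hj).2
  have hτn : #n.divisors = 4 ^ t := by
    simpa [hn] using card_divisors_prod_prime_pow hp hinj fun _ => 3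
  have hsmallest : ∀ i ∈ Icc 1 (3 * t / 4), ∀ j ∈ Icc 1 t \ Icc 1 (3 * t / 4), p i ≤ p j := by
    intro i hi j hj
    simp only [mem_sdiff, mem_Icc] at hi hj
    exact (hmono i j hi.1 (by lia) hj.1.2).le
  obtain ⟨d, hdvd, hle, hτd⟩ : ∃ d, d ∣ n ∧ d ^ 4 ≤ n ∧ #d.divisors = 2 ^ (3 * t / 4) := by
    simpa [hn] using exists_dvd_pow_le_card_divisors_eq_two_pow (m := 4) hp hinj
      (Icc_subset_Icc_right (by lia)) hsmallest three_ne_zero (by simp only [Nat.card_Icc]; lia)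
  refine ⟨fun ht => ⟨d, hdvd, hle, ?_⟩, fun ht => ⟨d, hdvd, hle, ?_⟩,
    fun ht => ⟨d, hdvd, hle, ?_⟩, fun ht => ⟨d, hdvd, hle, ?_⟩⟩
  · norm_num [hτn, hτd, ht]
  · norm_num [hτn, hτd, ht]
  · norm_num [hτn, hτd, ht]
  · calc #n.divisors = 2 ^ (2 * t) := by norm_num [hτn, pow_mul]
      _ ≤ 2 ^ (3 * t / 4 * 7) := Nat.pow_le_pow_right two_pos (by lia)
      _ = #d.divisors ^ 7 := by rw [hτd, pow_mul]
end
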